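/- Let Γ be a finite connected simple graph (in the notation below), let d := h_1(Γ), and let Ψ_Γ ∈ ℤ[A_e : e ∈ E] be its graph polynomial with respect to any ℤ-basis of ker ∂_ℤ. Then Ψ_Γ = ∑_T ∏_{e ∈ E∖E_T} A_e, where the sum runs over all spanning trees T of Γ. -/

import Mathlib

open scoped BigOperators

variable {V : Type} [Fintype V] [LinearOrder V]

/-- The incidence sign of a vertex `v` in an edge `e` of a graph whose vertices are
linearly ordered and whose edges are oriented from the smaller to the larger
endpoint: `+1` if `v` is the larger endpoint, `-1` if `v` is the smaller endpoint,
`0` otherwise. -/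
def incSign (R : Type) [CommRing R] (v : V) (e : Sym2 V) : R :=
  (if v = Sym2.sup e then 1 else 0) - (if v = Sym2.inf e then 1 else 0)

/-- The incidence (boundary) map `∂_R : R^E → R^V` of a finite graph `G`, sending the
basis vector of an edge `e = {u,v}` with `u < v` to `1_v − 1_u`. -/
noncomputable def boundary (R : Type) [CommRing R] (G : SimpleGraph V)
    [Fintype G.edgeSet] : (G.edgeSet → R) →ₗ[R] (V → R) :=
  Matrix.mulVecLin (Matrix.of fun (v : V) (e : G.edgeSet) => incSign R v e.1)

/-- The graph polynomial `Ψ_Γ = det(∑_e A_e·M_e)` of `G` with respect to a `ℤ`-basis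
`b` of the cycle space `ker ∂_ℤ`, where `M_e` is the `d × d` matrix with entries
`(b i) e · (b j) e`; an element of the polynomial ring `ℤ[A_e : e ∈ E]`. -/
noncomputable def graphPoly (G : SimpleGraph V) [Fintype G.edgeSet] {d : ℕ}
    (b : Module.Basis (Fin d) ℤ (LinearMap.ker (boundary ℤ G))) :
    MvPolynomial (Sym2 V) ℤ :=
  Matrix.det (Matrix.of fun i j : Fin d =>
    ∑ e : G.edgeSet, MvPolynomial.X (e : Sym2 V) *
      MvPolynomial.C (((b i : G.edgeSet → ℤ) e) * ((b j : G.edgeSet → ℤ) e)))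

/-!
If `B` is the matrix whose columns are the given basis of the cycle space and `w` the vector of
variables, then `Ψ = det (Bᵀ * diagonal w * B)`. By the Cauchy–Binet formula this is the sum over
the `d`-element edge sets `S` of `(∏ e ∈ S, w e) * (det B_S) ^ 2`, where `B_S` consists of the
rows of `B` indexed by `S`. It is the matrix of the restriction of cycles to `S`. When `E ∖ S` is
a tree, the fundamental cycles of the edges in `S` show that this restriction is bijective over
`ℤ`, so that `det B_S = ±1`. Conversely, if `det B_S ≠ 0` then no nonzero cycle avoids `S`, so
`E ∖ S` is acyclic; having as many edges as a spanning tree, it is one.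
-/

section CauchyBinet

open Matrix

variable {m n : Type*} [Fintype m]

section Enumeration

variable (g : ∀ S : Set.powersetCard n (Fintype.card m), m ≃ (S : Finset n))

lemma enumeration_comp_perm_injective :
    Function.Injective fun (p : Set.powersetCard n (Fintype.card m) × Equiv.Perm m) (i : m) =>
      (g p.1 (p.2 i) : n) := by
  rintro ⟨S, σ⟩ ⟨T, τ⟩ h
  have hi (i : m) : (g S (σ i) : n) = g T (τ i) := congrFun h i
  obtain rfl : S = T := by
    refine Set.powersetCard.eq_iff_subset.2 fun x hx => ?_
    have hx' := hi (σ.symm ((g S).symm ⟨x, hx⟩))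
    simp only [Equiv.apply_symm_apply] at hx'
    exact hx' ▸ Subtype.property _
  congr
  ext i
  exact (g S).injective (Subtype.ext (hi i))

lemma exists_enumeration_comp_perm_eq {f : m → n} (hf : Function.Injective f) :
    ∃ (S : Set.powersetCard n (Fintype.card m)) (σ : Equiv.Perm m),
      (fun i => (g S (σ i) : n)) = f := by
  classical
  let S : Set.powersetCard n (Fintype.card m) :=
    ⟨Finset.univ.image f, Finset.card_image_of_injective _ hf⟩
  have hmem (i : m) : f i ∈ (S : Finset n) := Finset.mem_image_of_mem f (Finset.mem_univ i)
  have hinj : Function.Injective fun i => (g S).symm ⟨f i, hmem i⟩ := fun i j hij =>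
    hf (congrArg Subtype.val ((g S).symm.injective hij))
  exact ⟨S, Equiv.ofBijective _ (Finite.injective_iff_bijective.1 hinj), by ext i; simp⟩

end Enumeration

variable {R : Type*} [CommRing R] [DecidableEq m]

lemma injective_of_det_submatrix_ne_zero {B : Matrix n m R} {f : m → n}
    (hdet : (B.submatrix f id).det ≠ 0) : Function.Injective f := by
  intro i j hij
  by_contra hne
  exact hdet (det_zero_of_row_eq hne (by ext k; simp [hij]))

lemma sum_perm_prod_mul_det_submatrix (M N : Matrix m m R) :
    ∑ σ : Equiv.Perm m, (∏ i, M i (σ i)) * (N.submatrix σ id).det = M.det * N.det := by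
  rw [← det_transpose M, det_apply', Finset.sum_mul]
  refine Finset.sum_congr rfl fun σ _ => ?_
  rw [det_permute]
  simp only [transpose_apply]
  ring

variable [Fintype n]

lemma det_mul_eq_sum_prod_mul_det_submatrix (A : Matrix m n R) (B : Matrix n m R) :
    (A * B).det = ∑ f : m → n, (∏ i, A i (f i)) * (B.submatrix f id).det := by
  have hrows : A * B = fun i => ∑ k, A i k • B k := by
    ext i j
    simp [mul_apply]
  calc (A * B).det = detRowAlternating fun i => ∑ k, A i k • B k := by rw [hrows]; rfl
    _ = ∑ f : m → n, detRowAlternating fun i => A i (f i) • B (f i) :=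
        detRowAlternating.toMultilinearMap.map_sum fun i k => A i k • B k
    _ = ∑ f : m → n, (∏ i, A i (f i)) * (B.submatrix f id).det :=
        Finset.sum_congr rfl fun f _ =>
          detRowAlternating.toMultilinearMap.map_smul_univ (fun i => A i (f i)) fun i => B (f i)

variable (g : ∀ S : Set.powersetCard n (Fintype.card m), m ≃ (S : Finset n))

-- The enumerations `g S` are arbitrary, since reordering changes the signs of both minors at once.
theorem det_mul_eq_sum_powersetCard (A : Matrix m n R) (B : Matrix n m R) :
    (A * B).det = ∑ S : Set.powersetCard n (Fintype.card m),
      (A.submatrix id fun i => (g S i : n)).det * (B.submatrix (fun i => (g S i : n)) id).det := by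
  simp_rw [← sum_perm_prod_mul_det_submatrix, det_mul_eq_sum_prod_mul_det_submatrix A B]
  rw [← Fintype.sum_prod_type']
  symm
  refine Finset.sum_of_injOn (fun p i => (g p.1 (p.2 i) : n))
    (enumeration_comp_perm_injective g).injOn (by simp) (fun f _ hf => ?_) fun p _ => rfl
  by_contra hne
  obtain ⟨S, σ, rfl⟩ := exists_enumeration_comp_perm_eq g
    (injective_of_det_submatrix_ne_zero (right_ne_zero_of_mul hne))
  exact hf ⟨(S, σ), by simp⟩

variable [DecidableEq n]

theorem det_transpose_mul_diagonal_mul_eq_sum_powersetCard (w : n → R) (B : Matrix n m R) :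
    (Bᵀ * diagonal w * B).det = ∑ S : Set.powersetCard n (Fintype.card m),
      (∏ k ∈ (S : Finset n), w k) * (B.submatrix (fun i => (g S i : n)) id).det ^ 2 := by
  rw [det_mul_eq_sum_powersetCard g]
  refine Finset.sum_congr rfl fun S _ => ?_
  have hprod : ∏ i, w (g S i) = ∏ k ∈ (S : Finset n), w k := by
    rw [← Finset.prod_coe_sort (S : Finset n)]
    exact (g S).prod_comp fun k => w k
  have hcols : (Bᵀ * diagonal w).submatrix id (fun i => (g S i : n)) =
      of fun i j => w (g S j) * (B.submatrix (fun i => (g S i : n)) id)ᵀ i j := by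
    ext i j
    simp [mul_comm]
  rw [hcols, det_mul_row, det_transpose, hprod]
  ring

end CauchyBinet

section CycleSpace

variable {W : Type} [LinearOrder W] {R : Type} [CommRing R] {G : SimpleGraph W} [Fintype G.edgeSet]

lemma boundary_apply (z : G.edgeSet → R) (v : W) :
    boundary R G z v = ∑ e : G.edgeSet, incSign R v e * z e := rfl

lemma boundary_single (e : G.edgeSet) (r : R) :
    boundary R G (Pi.single e r) =
      Pi.single (Sym2.sup (e : Sym2 W)) r - Pi.single (Sym2.inf (e : Sym2 W)) r := by
  ext v
  simp [boundary_apply, incSign, Pi.single_apply, sub_mul]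

lemma exists_boundary_single_eq {u v : W} (e : G.edgeSet) (he : (e : Sym2 W) = s(u, v)) :
    ∃ r : R, boundary R G (Pi.single e r) = Pi.single v 1 - Pi.single u 1 := by
  rcases le_total u v with huv | hvu
  · exact ⟨1, by simp [boundary_single, he, huv]⟩
  · exact ⟨-1, by simp [boundary_single, he, hvu, Pi.single_neg]⟩

lemma exists_boundary_eq_of_reachable {H : SimpleGraph W} (hHG : H ≤ G) {u v : W}
    (huv : H.Reachable u v) :
    ∃ z : G.edgeSet → R, (∀ e : G.edgeSet, (e : Sym2 W) ∉ H.edgeSet → z e = 0) ∧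
      boundary R G z = Pi.single v 1 - Pi.single u 1 := by
  obtain ⟨p⟩ := huv
  induction p with
  | nil => exact ⟨0, by simp, by simp⟩
  | @cons a b c hab _ ih =>
    obtain ⟨z, hz, hzbd⟩ := ih
    let e : G.edgeSet := ⟨s(a, b), hHG hab⟩
    obtain ⟨r, hr⟩ := exists_boundary_single_eq (R := R) e rfl
    refine ⟨z + Pi.single e r, fun f hf => ?_, by rw [map_add, hzbd, hr]; abel⟩
    have hfe : f ≠ e := by rintro rfl; exact hf hab
    simp [hz f hf, hfe]

lemma exists_fundamental_cycle {H : SimpleGraph W} (hHG : H ≤ G) (e : G.edgeSet)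
    (heH : (e : Sym2 W) ∉ H.edgeSet)
    (hreach : H.Reachable (Sym2.inf (e : Sym2 W)) (Sym2.sup (e : Sym2 W))) :
    ∃ z ∈ LinearMap.ker (boundary R G), z e = 1 ∧
      ∀ f : G.edgeSet, f ≠ e → (f : Sym2 W) ∉ H.edgeSet → z f = 0 := by
  obtain ⟨p, hp, hpbd⟩ := exists_boundary_eq_of_reachable (R := R) hHG hreach
  refine ⟨Pi.single e 1 - p, ?_, ?_, fun f hfe hfH => ?_⟩
  · rw [LinearMap.mem_ker, map_sub, hpbd, boundary_single, sub_self]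
  · simp [hp e heH]
  · simp [hp f hfH, hfe]

lemma sum_mul_sub_eq_zero_of_mem_ker_boundary {z : G.edgeSet → R}
    (hz : z ∈ LinearMap.ker (boundary R G)) (χ : W → R) :
    ∑ e : G.edgeSet, z e * (χ (Sym2.sup (e : Sym2 W)) - χ (Sym2.inf (e : Sym2 W))) = 0 := by
  let s : Finset W := Finset.univ.image (fun e : G.edgeSet => Sym2.sup (e : Sym2 W)) ∪
    Finset.univ.image (fun e : G.edgeSet => Sym2.inf (e : Sym2 W))
  have hsup (e : G.edgeSet) : Sym2.sup (e : Sym2 W) ∈ s :=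
    Finset.mem_union_left _ (Finset.mem_image_of_mem _ (Finset.mem_univ e))
  have hinf (e : G.edgeSet) : Sym2.inf (e : Sym2 W) ∈ s :=
    Finset.mem_union_right _ (Finset.mem_image_of_mem _ (Finset.mem_univ e))
  have hedge (e : G.edgeSet) : ∑ v ∈ s, χ v * incSign R v e =
      χ (Sym2.sup (e : Sym2 W)) - χ (Sym2.inf (e : Sym2 W)) := by
    simp [incSign, mul_sub, Finset.sum_sub_distrib, hsup e, hinf e]
  calc ∑ e : G.edgeSet, z e * (χ (Sym2.sup (e : Sym2 W)) - χ (Sym2.inf (e : Sym2 W)))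
    _ = ∑ e : G.edgeSet, ∑ v ∈ s, χ v * (incSign R v e * z e) := by
        simp_rw [← hedge, Finset.mul_sum]
        exact Finset.sum_congr rfl fun e _ => Finset.sum_congr rfl fun v _ => by ring
    _ = ∑ v ∈ s, χ v * boundary R G z v := by
        rw [Finset.sum_comm]
        simp_rw [boundary_apply, Finset.mul_sum]
    _ = 0 := by simp [LinearMap.mem_ker.1 hz]

lemma mk_inf_sup (e : Sym2 W) : s(Sym2.inf e, Sym2.sup e) = e :=
  Sym2.sortEquiv.symm_apply_apply e

lemma isBridge_iff_not_reachable_inf_sup {H : SimpleGraph W} {e : Sym2 W} :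
    H.IsBridge e ↔ ¬(H.deleteEdges {e}).Reachable (Sym2.inf e) (Sym2.sup e) := by
  simpa only [mk_inf_sup] using SimpleGraph.isBridge_iff (G := H) (u := e.inf) (v := e.sup)

-- Test the cycle against the indicator function of one side of the cut defined by the bridge.
lemma apply_eq_zero_of_isBridge {H : SimpleGraph W} {z : G.edgeSet → R}
    (hz : z ∈ LinearMap.ker (boundary R G))
    (hzH : ∀ f : G.edgeSet, (f : Sym2 W) ∉ H.edgeSet → z f = 0)
    {e : G.edgeSet} (he : H.IsBridge (e : Sym2 W)) : z e = 0 := by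
  classical
  rw [isBridge_iff_not_reachable_inf_sup] at he
  let K : SimpleGraph W := H.deleteEdges {(e : Sym2 W)}
  let χ : W → R := fun v => if K.Reachable (Sym2.inf (e : Sym2 W)) v then 1 else 0
  have hχ {u v : W} (huv : K.Adj u v) : χ u = χ v := by
    have : K.Reachable (Sym2.inf (e : Sym2 W)) u ↔ K.Reachable (Sym2.inf (e : Sym2 W)) v :=
      ⟨fun h => h.trans huv.reachable, fun h => h.trans huv.reachable.symm⟩
    simp only [χ, this]
  have hother (f : G.edgeSet) (hfe : f ≠ e) :
      z f * (χ (Sym2.sup (f : Sym2 W)) - χ (Sym2.inf (f : Sym2 W))) = 0 := by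
    by_cases hfH : (f : Sym2 W) ∈ H.edgeSet
    · have hfK : (f : Sym2 W) ∈ K.edgeSet := by
        simpa [K] using ⟨hfH, Subtype.coe_injective.ne hfe⟩
      rw [← mk_inf_sup (f : Sym2 W), SimpleGraph.mem_edgeSet] at hfK
      rw [hχ hfK, sub_self, mul_zero]
    · rw [hzH f hfH, zero_mul]
  have hcut := sum_mul_sub_eq_zero_of_mem_ker_boundary hz χ
  rw [Fintype.sum_eq_single e hother] at hcut
  simpa [χ, K, he] using hcut

lemma eq_zero_of_isAcyclic {H : SimpleGraph W} (hH : H.IsAcyclic) {z : G.edgeSet → R}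
    (hz : z ∈ LinearMap.ker (boundary R G))
    (hzH : ∀ f : G.edgeSet, (f : Sym2 W) ∉ H.edgeSet → z f = 0) : z = 0 := by
  ext e
  by_cases heH : (e : Sym2 W) ∈ H.edgeSet
  · exact apply_eq_zero_of_isBridge hz hzH (SimpleGraph.isAcyclic_iff_forall_isBridge.1 hH heH)
  · exact hzH e heH

end CycleSpace
section DeleteEdgeFinset

variable {W : Type*} {G H : SimpleGraph W}

/-- The spanning subgraph `E ∖ S` of a graph with edge set `E`. The set `S` consists of elements of
the subtype `G.edgeSet`, because it indexes rows of the cycle matrix of `G`. -/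
def deleteEdgeFinset (G : SimpleGraph W) (S : Finset G.edgeSet) : SimpleGraph W :=
  G.deleteEdges (Subtype.val '' (S : Set G.edgeSet))

variable {S T : Finset G.edgeSet}

lemma deleteEdgeFinset_le : deleteEdgeFinset G S ≤ G :=
  G.deleteEdges_le _

lemma mem_edgeSet_deleteEdgeFinset {e : G.edgeSet} :
    (e : Sym2 W) ∈ (deleteEdgeFinset G S).edgeSet ↔ e ∉ S := by
  simp [deleteEdgeFinset]

lemma edgeSet_sdiff_edgeSet_deleteEdgeFinset :
    G.edgeSet \ (deleteEdgeFinset G S).edgeSet = Subtype.val '' (S : Set G.edgeSet) := by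
  rw [deleteEdgeFinset, SimpleGraph.edgeSet_deleteEdges, Set.sdiff_sdiff_right_self]
  exact Set.inter_eq_right.2 (Subtype.coe_image_subset _ _)

lemma subset_of_deleteEdgeFinset_le (h : deleteEdgeFinset G S ≤ deleteEdgeFinset G T) : T ⊆ S := by
  intro e heT
  by_contra heS
  exact mem_edgeSet_deleteEdgeFinset.1
    (SimpleGraph.edgeSet_mono h (mem_edgeSet_deleteEdgeFinset.2 heS)) heT

lemma deleteEdgeFinset_injective :
    Function.Injective (deleteEdgeFinset G) := fun _ _ h =>
  (subset_of_deleteEdgeFinset_le h.ge).antisymm (subset_of_deleteEdgeFinset_le h.le)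

lemma exists_deleteEdgeFinset_eq [Finite G.edgeSet] (hHG : H ≤ G) :
    ∃ S : Finset G.edgeSet, deleteEdgeFinset G S = H := by
  let S := {e : G.edgeSet | (e : Sym2 W) ∉ H.edgeSet}.toFinite.toFinset
  refine ⟨S, SimpleGraph.edgeSet_injective (Set.ext fun e => ?_)⟩
  by_cases he : e ∈ G.edgeSet
  · rw [mem_edgeSet_deleteEdgeFinset (e := ⟨e, he⟩)]
    simp [S]
  · exact iff_of_false (fun h => he (SimpleGraph.edgeSet_mono deleteEdgeFinset_le h))
      fun h => he (SimpleGraph.edgeSet_mono hHG h)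

end DeleteEdgeFinset

section CycleRestrict

variable {W : Type} [LinearOrder W] (R : Type) [CommRing R] (G : SimpleGraph W) [Fintype G.edgeSet]

/-- Restriction of the cycles of `G` to the edges in `S`. In a basis of the cycle space it is given
by the rows of the cycle matrix indexed by `S`. -/
noncomputable def cycleRestrict (S : Finset G.edgeSet) :
    LinearMap.ker (boundary R G) →ₗ[R] (S → R) :=
  LinearMap.funLeft R R Subtype.val ∘ₗ Submodule.subtype _

variable {R G} {S : Finset G.edgeSet}

@[simp]
lemma cycleRestrict_apply (z : LinearMap.ker (boundary R G)) (e : S) :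
    cycleRestrict R G S z e = (z : G.edgeSet → R) e := rfl

lemma cycleRestrict_injective (hS : (deleteEdgeFinset G S).IsAcyclic) :
    Function.Injective (cycleRestrict R G S) := by
  refine (injective_iff_map_eq_zero _).2 fun z hz => Subtype.ext ?_
  refine eq_zero_of_isAcyclic hS z.2 fun f hf => ?_
  rw [mem_edgeSet_deleteEdgeFinset, not_not] at hf
  exact congrFun hz ⟨f, hf⟩

lemma isAcyclic_of_cycleRestrict_injective [Nontrivial R]
    (hinj : Function.Injective (cycleRestrict R G S)) : (deleteEdgeFinset G S).IsAcyclic := by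
  refine SimpleGraph.isAcyclic_iff_forall_isBridge.2 fun e he => ?_
  let H := (deleteEdgeFinset G S).deleteEdges {e}
  have hHS : H ≤ deleteEdgeFinset G S := SimpleGraph.deleteEdges_le _
  let eG : G.edgeSet := ⟨e, SimpleGraph.edgeSet_mono deleteEdgeFinset_le he⟩
  have heS : eG ∉ S := mem_edgeSet_deleteEdgeFinset.1 he
  rw [isBridge_iff_not_reachable_inf_sup]
  intro hreach
  obtain ⟨z, hz, hze, hzH⟩ := exists_fundamental_cycle (R := R)
    (hHS.trans deleteEdgeFinset_le) eG (by simp [H, eG]) hreach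
  have hzS : cycleRestrict R G S ⟨z, hz⟩ = 0 := by
    ext f
    exact hzH f (fun hf => heS (hf ▸ f.2)) fun hf =>
      mem_edgeSet_deleteEdgeFinset.1 (SimpleGraph.edgeSet_mono hHS hf) f.2
  have hz0 : z = 0 := congrArg Subtype.val ((injective_iff_map_eq_zero _).1 hinj _ hzS)
  simp [hz0] at hze

lemma cycleRestrict_surjective (hS : (deleteEdgeFinset G S).Preconnected) :
    Function.Surjective (cycleRestrict R G S) := by
  have hfund (e : S) : ∃ z, cycleRestrict R G S z = Pi.single e 1 := by
    obtain ⟨z, hz, hze, hzS⟩ := exists_fundamental_cycle (R := R) deleteEdgeFinset_le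
      (e : G.edgeSet) (by simp [mem_edgeSet_deleteEdgeFinset]) (hS _ _)
    refine ⟨⟨z, hz⟩, funext fun f => ?_⟩
    rcases eq_or_ne f e with rfl | hfe
    · simpa using hze
    · simpa [hfe] using
        hzS f (Subtype.coe_injective.ne hfe) (by simp [mem_edgeSet_deleteEdgeFinset])
  rw [← LinearMap.range_eq_top, eq_top_iff, ← (Pi.basisFun R S).span_eq, Submodule.span_le]
  rintro _ ⟨e, rfl⟩
  simpa using hfund e

lemma cycleRestrict_bijective (hS : (deleteEdgeFinset G S).IsTree) :
    Function.Bijective (cycleRestrict R G S) :=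
  ⟨cycleRestrict_injective hS.isAcyclic, cycleRestrict_surjective hS.connected.preconnected⟩

variable {ι : Type*} [Fintype ι]

lemma card_eq_card_of_isTree [Nontrivial R]
    (b : Module.Basis ι R (LinearMap.ker (boundary R G))) (hS : (deleteEdgeFinset G S).IsTree) :
    S.card = Fintype.card ι := by
  have h := (LinearEquiv.ofBijective _ (cycleRestrict_bijective (R := R) hS)).finrank_eq
  rw [Module.finrank_eq_card_basis b, Module.finrank_fintype_fun_eq_card, Fintype.card_coe] at h
  exact h.symm

-- An acyclic subgraph extends to a spanning tree, which cannot be larger by the edge count.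
lemma isTree_of_cycleRestrict_injective [Nontrivial R] (hG : G.Connected)
    (b : Module.Basis ι R (LinearMap.ker (boundary R G)))
    (hcard : S.card = Fintype.card ι) (hinj : Function.Injective (cycleRestrict R G S)) :
    (deleteEdgeFinset G S).IsTree := by
  obtain ⟨F, hSF, hFG, hF⟩ := hG.exists_isTree_le_of_le_of_isAcyclic deleteEdgeFinset_le
    (isAcyclic_of_cycleRestrict_injective hinj)
  obtain ⟨T, rfl⟩ := exists_deleteEdgeFinset_eq hFG
  have hTS : T = S := Finset.eq_of_subset_of_card_le (subset_of_deleteEdgeFinset_le hSF)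
    (hcard.trans (card_eq_card_of_isTree b hF).symm).le
  rwa [hTS] at hF

end CycleRestrict

section CycleMatrix

open Matrix

variable {W : Type} [LinearOrder W] {R : Type} [CommRing R] {G : SimpleGraph W} [Fintype G.edgeSet]
  {S : Finset G.edgeSet} {ι : Type*} (b : Module.Basis ι R (LinearMap.ker (boundary R G)))

/-- The matrix whose columns are the members of a basis of the cycle space, so that
`M_e` is the product of its row `e`, as a column vector, with itself, as a row vector. -/
noncomputable def cycleMatrix : Matrix G.edgeSet ι R :=
  of fun e i => (b i : G.edgeSet → R) e

variable [Fintype ι] [DecidableEq ι] (g : ι ≃ S)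

lemma toMatrix_cycleRestrict :
    LinearMap.toMatrix b ((Pi.basisFun R S).reindex g.symm) (cycleRestrict R G S) =
      (cycleMatrix b).submatrix (fun i => g i) id := by
  ext i j
  simp [LinearMap.toMatrix_apply, cycleMatrix]

lemma isUnit_det_submatrix_cycleMatrix (hS : (deleteEdgeFinset G S).IsTree) :
    IsUnit ((cycleMatrix b).submatrix (fun i => g i) id).det := by
  let φ := LinearEquiv.ofBijective (cycleRestrict R G S) (cycleRestrict_bijective hS)
  have hφ : (φ : LinearMap.ker (boundary R G) →ₗ[R] (S → R)) = cycleRestrict R G S := rfl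
  rw [← toMatrix_cycleRestrict, ← hφ]
  exact φ.isUnit_det b _

lemma isTree_of_det_submatrix_cycleMatrix_ne_zero [IsDomain R] (hG : G.Connected)
    (hdet : ((cycleMatrix b).submatrix (fun i => g i) id).det ≠ 0) :
    (deleteEdgeFinset G S).IsTree := by
  have hcard : S.card = Fintype.card ι := by rw [Fintype.card_congr g, Fintype.card_coe]
  refine isTree_of_cycleRestrict_injective hG b hcard ?_
  refine (injective_iff_map_eq_zero _).2 fun z hz => ?_
  have hmul := LinearMap.toMatrix_mulVec_repr b ((Pi.basisFun R S).reindex g.symm)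
    (cycleRestrict R G S) z
  rw [toMatrix_cycleRestrict, hz, map_zero, Finsupp.coe_zero] at hmul
  exact b.repr.map_eq_zero_iff.1 (DFunLike.coe_injective (eq_zero_of_mulVec_eq_zero hdet hmul))

open Classical in
lemma sq_det_submatrix_cycleMatrix (hG : G.Connected)
    (b : Module.Basis ι ℤ (LinearMap.ker (boundary ℤ G))) :
    ((cycleMatrix b).submatrix (fun i => (g i : G.edgeSet)) id).det ^ 2 =
      if (deleteEdgeFinset G S).IsTree then 1 else 0 := by
  split_ifs with hS
  · exact Int.isUnit_sq (isUnit_det_submatrix_cycleMatrix b g hS)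
  · rw [sq_eq_zero_iff]
    by_contra hdet
    exact hS (isTree_of_det_submatrix_cycleMatrix_ne_zero b g hG hdet)

end CycleMatrix

section GraphPoly

open Matrix MvPolynomial

variable {W : Type} [LinearOrder W] {G : SimpleGraph W} [Fintype G.edgeSet] {d : ℕ}
  (b : Module.Basis (Fin d) ℤ (LinearMap.ker (boundary ℤ G)))

lemma graphPoly_eq_det_transpose_mul_diagonal_mul :
    graphPoly G b = (((cycleMatrix b).map (C (σ := Sym2 W)))ᵀ *
      diagonal (fun e : G.edgeSet => X (R := ℤ) (e : Sym2 W)) *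
        (cycleMatrix b).map (C (σ := Sym2 W))).det := by
  refine congrArg det (Matrix.ext fun i j => ?_)
  rw [mul_apply]
  simp only [of_apply, cycleMatrix, mul_diagonal, transpose_apply, map_apply, map_mul]
  exact Finset.sum_congr rfl fun e _ => by ring

lemma graphPoly_eq_sum_powersetCard
    (g : ∀ S : Set.powersetCard G.edgeSet (Fintype.card (Fin d)), Fin d ≃ (S : Finset G.edgeSet)) :
    graphPoly G b = ∑ S : Set.powersetCard G.edgeSet (Fintype.card (Fin d)),
      (∏ e ∈ (S : Finset G.edgeSet), X (e : Sym2 W)) *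
        C (((cycleMatrix b).submatrix (fun i => (g S i : G.edgeSet)) id).det ^ 2) := by
  rw [graphPoly_eq_det_transpose_mul_diagonal_mul,
    det_transpose_mul_diagonal_mul_eq_sum_powersetCard g]
  refine Finset.sum_congr rfl fun S _ => ?_
  rw [map_pow, RingHom.map_det, RingHom.mapMatrix_apply, submatrix_map]

open Classical in
theorem graphPoly_eq_sum_isTree (hG : G.Connected) :
    graphPoly G b = ∑ S : Finset G.edgeSet with (deleteEdgeFinset G S).IsTree,
      ∏ e ∈ S, X (e : Sym2 W) := by
  let g (S : Set.powersetCard G.edgeSet (Fintype.card (Fin d))) : Fin d ≃ (S : Finset G.edgeSet) :=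
    Fintype.equivOfCardEq (by rw [Fintype.card_coe, Set.powersetCard.card_eq])
  simp_rw [graphPoly_eq_sum_powersetCard b g, sq_det_submatrix_cycleMatrix _ hG, apply_ite C,
    map_one, map_zero, mul_ite, mul_one, mul_zero]
  rw [← Finset.sum_filter]
  refine Finset.sum_nbij Subtype.val (by simp) Subtype.val_injective.injOn ?_ fun _ _ => rfl
  intro S hS
  have hS' : (deleteEdgeFinset G S).IsTree := by simpa using hS
  exact ⟨⟨S, card_eq_card_of_isTree b hS'⟩, by simpa using hS', rfl⟩

end GraphPoly

/-- **The matrix-tree expansion of the graph polynomial** (Proposition 2.2 of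
Bloch–Esnault–Kreimer): for a finite connected simple graph `G`, with respect to any
`ℤ`-basis of the cycle space,
`Ψ_Γ = ∑_{T spanning tree} ∏_{e ∉ E_T} A_e`. -/
theorem graphPoly_eq_sum_spanning_trees
    (G : SimpleGraph V) [Fintype G.edgeSet] (hG : G.Connected)
    {d : ℕ} (b : Module.Basis (Fin d) ℤ (LinearMap.ker (boundary ℤ G))) :
    graphPoly G b =
      ∑ T ∈ {T : SimpleGraph V | T ≤ G ∧ T.IsTree}.toFinite.toFinset,
        ∏ e ∈ (G.edgeSet \ T.edgeSet).toFinite.toFinset, MvPolynomial.X e := by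
  classical
  rw [graphPoly_eq_sum_isTree b hG]
  refine Finset.sum_nbij (deleteEdgeFinset G) ?_ deleteEdgeFinset_injective.injOn ?_ fun S _ => ?_
  · intro S hS
    simpa [deleteEdgeFinset_le] using hS
  · intro T hT
    obtain ⟨hTG, hTtree⟩ : T ≤ G ∧ T.IsTree := by simpa using hT
    obtain ⟨S, rfl⟩ := exists_deleteEdgeFinset_eq hTG
    exact ⟨S, by simpa using hTtree, rfl⟩
  · have hS : (G.edgeSet \ (deleteEdgeFinset G S).edgeSet).toFinite.toFinset =
        S.map (Function.Embedding.subtype _) := by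
      ext e
      simp [edgeSet_sdiff_edgeSet_deleteEdgeFinset]
    rw [hS, Finset.prod_map]
    rfl
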